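/- Suboptimality of the Laplace slab for the complete empirical Bayes posterior: there exist constants D > 0, N_0 > 0 and c_0 > 0 such that, for any n ≥ N_0 and any integer s_n with 1 ≤ s_n ≤ c_0·n, there exists θ_0 ∈ ℓ0[s_n] such that E_{θ_0} ∫ ‖θ − θ_0‖² dΠ_{ĥα}(θ | X) ≥ D · s_n · exp(√(log(n/s_n))), where ‖·‖ is the Euclidean norm on ℝ^n. -/

import Mathlib

/-!
Statement 0: Suboptimality of the Laplace slab for the complete empirical
Bayes posterior in the sparse Gaussian sequence model.
-/

open MeasureTheory Real Set

noncomputable section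

/-- Standard normal density. -/
def phi (x : ℝ) : ℝ := Real.exp (-x ^ 2 / 2) / Real.sqrt (2 * Real.pi)

/-- Standard Laplace density. -/
def lapDen (x : ℝ) : ℝ := Real.exp (-|x|) / 2

/-- Convolution `g = φ * γ`. -/
def conv (γ : ℝ → ℝ) (x : ℝ) : ℝ := ∫ u, phi (x - u) * γ u

/-- Posterior weight `a(x) = α g(x) / ((1-α) φ(x) + α g(x))`. -/
def aWt (γ : ℝ → ℝ) (α x : ℝ) : ℝ :=
  α * conv γ x / ((1 - α) * phi x + α * conv γ x)

/-- Density of the single-coordinate posterior with respect to `volume + δ₀`: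
the point mass `1 - a(x)` at `0`, and the continuous part `a(x) γ_x`. -/
def coordDen (γ : ℝ → ℝ) (α x u : ℝ) : ℝ :=
  if u = 0 then 1 - aWt γ α x else aWt γ α x * (phi (x - u) * γ u / conv γ x)

/-- Single-coordinate posterior `(1 - a(x)) δ₀ + a(x) G_x`. -/
def coordPost (γ : ℝ → ℝ) (α x : ℝ) : Measure ℝ :=
  (volume + Measure.dirac (0 : ℝ)).withDensity fun u => ENNReal.ofReal (coordDen γ α x u)

/-- The spike and slab posterior `Π_α[· | X]` on `ℝⁿ`, for a fixed weight `α`. -/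
def post (γ : ℝ → ℝ) (n : ℕ) (α : ℝ) (X : Fin n → ℝ) : Measure (Fin n → ℝ) :=
  Measure.pi fun i => coordPost γ α (X i)

/-- Law `P_θ` of the data `X`, `X_i = θ_i + ε_i` with `ε_i` i.i.d. `N(0,1)`. -/
def Pdata (n : ℕ) (θ : Fin n → ℝ) : Measure (Fin n → ℝ) :=
  Measure.pi fun i => ProbabilityTheory.gaussianReal (θ i) 1

/-- The class `ℓ₀[s]` of `s`-sparse vectors. -/
def ell0 (n s : ℕ) : Set (Fin n → ℝ) := {θ | Nat.card {i : Fin n // θ i ≠ 0} ≤ s}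

/-- Log-marginal likelihood `ℓ_n(α; X)`. -/
def logMarg (γ : ℝ → ℝ) {n : ℕ} (α : ℝ) (X : Fin n → ℝ) : ℝ :=
  ∑ i, Real.log ((1 - α) * phi (X i) + α * conv γ (X i))

/-- `0` is a median of the single-coordinate posterior distribution. -/
def medianZero (γ : ℝ → ℝ) (α x : ℝ) : Prop :=
  2⁻¹ ≤ coordPost γ α x (Set.Iic 0) ∧ 2⁻¹ ≤ coordPost γ α x (Set.Ici 0)

/-- `t` is the posterior median threshold function: for each `α ∈ (0,1)`,
`t α > 0` and the posterior median at observation `x` is `0` iff `|x| ≤ t α`. -/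
def IsThreshold (γ : ℝ → ℝ) (t : ℝ → ℝ) : Prop :=
  ∀ α ∈ Set.Ioo (0 : ℝ) 1, 0 < t α ∧ ∀ x : ℝ, (medianZero γ α x ↔ |x| ≤ t α)

/-- `hahat` is a marginal maximum likelihood empirical Bayes estimator of `α`,
with maximisation restricted to `[αn, 1]`. -/
def IsMMLE (γ : ℝ → ℝ) {n : ℕ} (αn : ℝ) (hahat : (Fin n → ℝ) → ℝ) : Prop :=
  Measurable hahat ∧ ∀ X : Fin n → ℝ, hahat X ∈ Set.Icc αn 1 ∧
    ∀ α ∈ Set.Icc αn 1, logMarg γ α X ≤ logMarg γ (hahat X) X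

/-- Expected posterior squared `L²`-moment
`E_{θ₀} ∫ ‖θ - θ₀‖² dΠ_{ĥα}(θ | X)` for the plug-in posterior. -/
def postRisk (γ : ℝ → ℝ) {n : ℕ} (hahat : (Fin n → ℝ) → ℝ) (θ0 : Fin n → ℝ) : ℝ :=
  ∫ X, (∫ θ, (∑ i, (θ i - θ0 i) ^ 2) ∂(post γ n (hahat X) X)) ∂(Pdata n θ0)

/-! Write `g = φ * γ` and compare the weights `α` and `2α`. By concavity of the log-marginal
likelihood, `α̂ < α` forces the likelihood ratio of `α` against `2α` to be at least one, so by
Markov's inequality it suffices to bound the expectation of that ratio, which factorises over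
coordinates. With `r = √(log (n / s))` and `α = exp (-r² + r) = (s / n) exp r`, a null coordinate
contributes at most `1 + s / (8n)`, because the chi-square type remainder
`∫ α² (g - φ)² / ((1 - α) φ + α g)` is `o(exp (-r²))` when `γ` has tails no heavier than Laplace.
A coordinate carrying a large enough signal contributes at most `3 / 4`, so `s` of them make
`α ≤ α̂` an event of probability bounded below. On that event every null coordinate has posterior
second moment at least a constant times `α`, hence the risk is at least of order
`n α = s exp r`. -/

section Analysis

lemma integral_exp_neg_mul_abs {η : ℝ} (hη : 0 < η) : ∫ x : ℝ, exp (-η * |x|) = 2 / η := by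
  rw [integral_comp_abs (f := fun x => exp (-η * x)), integral_exp_mul_Ioi (by linarith)]
  simp only [mul_zero, exp_zero]
  field_simp

lemma integrable_exp_neg_mul_abs {η : ℝ} (hη : 0 < η) :
    Integrable fun x : ℝ => exp (-η * |x|) :=
  .of_integral_ne_zero (by rw [integral_exp_neg_mul_abs hη]; positivity)

lemma sq_div_two_add_one_le_cosh (y : ℝ) : y ^ 2 / 2 + 1 ≤ cosh y := by
  have hsinh : |y / 2| ≤ |sinh (y / 2)| := by
    rcases le_total 0 (y / 2) with h | h
    · exact abs_le_abs_of_nonneg h (self_le_sinh_iff.2 h)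
    · exact abs_le_abs_of_nonpos h (sinh_le_self_iff.2 h)
  have hcosh : cosh y = 2 * sinh (y / 2) ^ 2 + 1 := by
    rw [show y = 2 * (y / 2) by ring, cosh_two_mul, cosh_sq]; ring_nf
  linarith [sq_le_sq.2 hsinh]

lemma integrable_cosh_mul_of_even {f : ℝ → ℝ} (hf : f.Even) {x : ℝ}
    (hi : Integrable fun u => exp (x * u) * f u) : Integrable fun u => cosh (x * u) * f u := by
  refine ((hi.add hi.comp_neg).div_const 2).congr (.of_forall fun u => ?_)
  simp only [Pi.add_apply, hf u, cosh_eq, mul_neg]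
  ring

lemma integral_exp_mul_eq_integral_cosh_mul {f : ℝ → ℝ} (hf : f.Even) {x : ℝ}
    (hi : Integrable fun u => exp (x * u) * f u) :
    ∫ u, exp (x * u) * f u = ∫ u, cosh (x * u) * f u := by
  have hneg : ∫ u, exp (x * -u) * f (-u) = ∫ u, exp (x * u) * f u :=
    integral_neg_eq_self (fun u => exp (x * u) * f u) volume
  calc ∫ u, exp (x * u) * f u
      = ((∫ u, exp (x * u) * f u) + ∫ u, exp (x * -u) * f (-u)) / 2 := by rw [hneg]; ring
    _ = ∫ u, (exp (x * u) * f u + exp (x * -u) * f (-u)) / 2 := by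
        rw [← integral_add hi hi.comp_neg, integral_div]
    _ = ∫ u, cosh (x * u) * f u := by
        congr 1; ext u; rw [hf u, cosh_eq, mul_neg]; ring

/- Chebyshev's association inequality: expand the integral of
`w a * w b * (f a - f b) * (g a - g b)` over the product space. -/
lemma integral_mul_integral_le_of_monovary {X : Type*} [MeasurableSpace X] {μ : Measure X}
    [SFinite μ] {w f g : X → ℝ} (hw : 0 ≤ w) (hfg : Monovary f g) (hi : Integrable w μ)
    (hif : Integrable (fun a => f a * w a) μ) (hig : Integrable (fun a => g a * w a) μ)
    (hifg : Integrable (fun a => f a * g a * w a) μ) :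
    (∫ a, f a * w a ∂μ) * ∫ a, g a * w a ∂μ ≤ (∫ a, w a ∂μ) * ∫ a, f a * g a * w a ∂μ := by
  have hexpand : ∀ p : X × X, w p.1 * w p.2 * ((f p.2 - f p.1) * (g p.2 - g p.1)) =
      (w p.1 * (f p.2 * g p.2 * w p.2) + f p.1 * g p.1 * w p.1 * w p.2) -
        (f p.1 * w p.1 * (g p.2 * w p.2) + g p.1 * w p.1 * (f p.2 * w p.2)) := fun p => by ring
  have hnonneg : 0 ≤ ∫ p, w p.1 * w p.2 * ((f p.2 - f p.1) * (g p.2 - g p.1)) ∂μ.prod μ :=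
    integral_nonneg fun p => mul_nonneg (mul_nonneg (hw _) (hw _))
      (monovary_iff_forall_mul_nonneg.1 hfg _ _)
  have hdiag : Integrable (fun p : X × X =>
      w p.1 * (f p.2 * g p.2 * w p.2) + f p.1 * g p.1 * w p.1 * w p.2) (μ.prod μ) :=
    (hi.mul_prod hifg).add (hifg.mul_prod hi)
  have hcross : Integrable (fun p : X × X =>
      f p.1 * w p.1 * (g p.2 * w p.2) + g p.1 * w p.1 * (f p.2 * w p.2)) (μ.prod μ) :=
    (hif.mul_prod hig).add (hig.mul_prod hif)
  simp_rw [hexpand] at hnonneg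
  rw [integral_sub hdiag hcross, integral_add (hi.mul_prod hifg) (hifg.mul_prod hi),
    integral_add (hif.mul_prod hig) (hig.mul_prod hif)] at hnonneg
  simp only [integral_prod_mul w fun b => f b * g b * w b,
    integral_prod_mul (fun a => f a * g a * w a) w,
    integral_prod_mul (fun a => f a * w a) fun b => g b * w b,
    integral_prod_mul (fun a => g a * w a) fun b => f b * w b] at hnonneg
  linarith

lemma monovary_sq_cosh_mul (x : ℝ) : Monovary (fun u : ℝ => u ^ 2) fun u => cosh (x * u) := by
  intro u v huv
  rw [cosh_lt_cosh, abs_mul, abs_mul] at huv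
  exact sq_le_sq.2 (lt_of_mul_lt_mul_left huv (abs_nonneg x)).le

end Analysis

section GaussianDensity

lemma phi_pos (x : ℝ) : 0 < phi x := by unfold phi; positivity

lemma phi_even : phi.Even := fun x => by simp only [phi, neg_sq]

lemma phi_le_exp (x : ℝ) : phi x ≤ exp (-x ^ 2 / 2) :=
  div_le_self (exp_pos _).le (one_le_sqrt.2 (by linarith [pi_gt_three]))

lemma phi_le_one (x : ℝ) : phi x ≤ 1 :=
  (phi_le_exp x).trans (exp_le_one_iff.2 (by linarith [sq_nonneg x]))

@[fun_prop]
lemma continuous_phi : Continuous phi := by unfold phi; fun_prop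

lemma gaussianPDFReal_zero_one : ProbabilityTheory.gaussianPDFReal 0 1 = phi := by
  ext x
  simp only [ProbabilityTheory.gaussianPDFReal, phi, NNReal.coe_one, mul_one, sub_zero]
  ring

lemma integral_gaussianReal_zero_one (f : ℝ → ℝ) :
    ∫ x, f x ∂(ProbabilityTheory.gaussianReal 0 1) = ∫ x, phi x * f x := by
  rw [ProbabilityTheory.integral_gaussianReal_eq_integral_smul one_ne_zero,
    gaussianPDFReal_zero_one]
  rfl

lemma integrable_phi : Integrable phi :=
  gaussianPDFReal_zero_one ▸ ProbabilityTheory.integrable_gaussianPDFReal 0 1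

lemma integral_phi : ∫ x, phi x = 1 :=
  gaussianPDFReal_zero_one ▸ ProbabilityTheory.integral_gaussianPDFReal_eq_one 0 one_ne_zero

lemma phi_sub (x u : ℝ) : phi (x - u) = exp (-x ^ 2 / 2) * (exp (x * u) * phi u) := by
  rw [phi, phi, mul_div_assoc', mul_div_assoc', ← exp_add, ← exp_add]
  ring_nf

lemma sq_mul_phi_le_two (v : ℝ) : v ^ 2 * phi v ≤ 2 := by
  have hexp : v ^ 2 / 2 ≤ exp (v ^ 2 / 2) := by linarith [add_one_le_exp (v ^ 2 / 2)]
  calc v ^ 2 * phi v ≤ 2 * exp (v ^ 2 / 2) * exp (-v ^ 2 / 2) :=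
        mul_le_mul (by linarith) (phi_le_exp v) (phi_pos v).le (by positivity)
    _ = 2 := by rw [mul_assoc, ← exp_add, neg_div, add_neg_cancel, exp_zero, mul_one]

lemma exp_sq_div_four_mul_phi_le_one (v : ℝ) : exp (v ^ 2 / 4) * phi v ≤ 1 :=
  calc exp (v ^ 2 / 4) * phi v ≤ exp (v ^ 2 / 4) * exp (-v ^ 2 / 2) := by
        gcongr; exact phi_le_exp v
    _ ≤ 1 := by rw [← exp_add, exp_le_one_iff]; linarith [sq_nonneg v]

lemma integral_gaussianReal_eq_integral_add (f : ℝ → ℝ) (m : ℝ) :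
    ∫ x, f x ∂(ProbabilityTheory.gaussianReal m 1) =
      ∫ x, f (x + m) ∂(ProbabilityTheory.gaussianReal 0 1) := by
  have hshift : ProbabilityTheory.gaussianReal m 1 =
      (ProbabilityTheory.gaussianReal 0 1).map (· + m) := by
    rw [ProbabilityTheory.gaussianReal_map_add_const, zero_add]
  rw [hshift, (measurableEmbedding_addRight m).integral_map]

end GaussianDensity

/-- A symmetric probability density on `ℝ`, used as the slab of the prior. -/
structure IsSlab (γ : ℝ → ℝ) : Prop where
  measurable : Measurable γ
  nonneg : ∀ u, 0 ≤ γ u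
  even : γ.Even
  integral_eq_one : ∫ u, γ u = 1

/-- The joint density of (observation, parameter) at `(x, u)` when the parameter is drawn from the
slab `γ`; as a function of `u` it is `G_x` up to the normalising constant `conv γ x`. -/
def slabKernel (γ : ℝ → ℝ) (x u : ℝ) : ℝ := phi (x - u) * γ u

/-- The second moment about `μ` of the unnormalised slab posterior `slabKernel γ x`. -/
def slabMoment (γ : ℝ → ℝ) (μ x : ℝ) : ℝ := ∫ u, (u - μ) ^ 2 * slabKernel γ x u

section SlabPosteriorMoments

variable {γ : ℝ → ℝ}

lemma conv_eq_integral_slabKernel (γ : ℝ → ℝ) (x : ℝ) : conv γ x = ∫ u, slabKernel γ x u := rfl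

lemma slabKernel_eq_exp_mul (γ : ℝ → ℝ) (x u : ℝ) :
    slabKernel γ x u = exp (-x ^ 2 / 2) * (exp (x * u) * slabKernel γ 0 u) := by
  rw [slabKernel, slabKernel, phi_sub, zero_sub, phi_even]
  ring

namespace IsSlab

lemma integrable (hγ : IsSlab γ) : Integrable γ :=
  .of_integral_ne_zero (by rw [hγ.integral_eq_one]; exact one_ne_zero)

lemma measurable_uncurry_slabKernel (hγ : IsSlab γ) :
    Measurable (Function.uncurry (slabKernel γ)) :=
  ((continuous_phi.comp (continuous_fst.sub continuous_snd)).measurable).mul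
    (hγ.measurable.comp measurable_snd)

lemma measurable_slabKernel (hγ : IsSlab γ) (x : ℝ) : Measurable (slabKernel γ x) :=
  hγ.measurable_uncurry_slabKernel.of_uncurry_left

lemma slabKernel_nonneg (hγ : IsSlab γ) (x u : ℝ) : 0 ≤ slabKernel γ x u :=
  mul_nonneg (phi_pos _).le (hγ.nonneg u)

lemma slabKernel_zero_even (hγ : IsSlab γ) : (slabKernel γ 0).Even := fun u => by
  rw [slabKernel, slabKernel, hγ.even, zero_sub, zero_sub, phi_even (-u)]

lemma integrable_mul_slabKernel (hγ : IsSlab γ) {q : ℝ → ℝ} (hq : Measurable q) {x C : ℝ}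
    (hC : ∀ u, |q u * phi (x - u)| ≤ C) : Integrable fun u => q u * slabKernel γ x u := by
  simp only [slabKernel, ← mul_assoc]
  exact hγ.integrable.bdd_mul (c := C)
    (hq.mul (continuous_phi.comp (continuous_sub_left x)).measurable).aestronglyMeasurable
    (.of_forall hC)

lemma integrable_slabKernel (hγ : IsSlab γ) (x : ℝ) : Integrable (slabKernel γ x) := by
  simpa only [one_mul] using hγ.integrable_mul_slabKernel (q := fun _ => 1) (x := x)
    measurable_const fun u => by rw [one_mul, abs_of_pos (phi_pos _)]; exact phi_le_one _

lemma integrable_sq_sub_mul_slabKernel (hγ : IsSlab γ) (μ x : ℝ) :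
    Integrable fun u => (u - μ) ^ 2 * slabKernel γ x u := by
  refine hγ.integrable_mul_slabKernel (C := 4 + 2 * (x - μ) ^ 2) (by fun_prop) fun u => ?_
  rw [abs_of_nonneg (mul_nonneg (sq_nonneg _) (phi_pos _).le)]
  calc (u - μ) ^ 2 * phi (x - u) ≤ (2 * (x - u) ^ 2 + 2 * (x - μ) ^ 2) * phi (x - u) := by
        have := phi_pos (x - u)
        gcongr
        nlinarith [sq_nonneg ((x - u) + (x - μ))]
    _ = 2 * ((x - u) ^ 2 * phi (x - u)) + 2 * (x - μ) ^ 2 * phi (x - u) := by ring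
    _ ≤ 2 * 2 + 2 * (x - μ) ^ 2 * 1 := by
        gcongr
        · exact sq_mul_phi_le_two _
        · exact phi_le_one _
    _ = 4 + 2 * (x - μ) ^ 2 := by ring

lemma measurable_conv (hγ : IsSlab γ) : Measurable (conv γ) :=
  (hγ.measurable_uncurry_slabKernel.stronglyMeasurable.integral_prod_right).measurable

lemma measurable_slabMoment (hγ : IsSlab γ) (μ : ℝ) : Measurable (slabMoment γ μ) :=
  (((measurable_snd.sub_const μ).pow_const 2).mul
    hγ.measurable_uncurry_slabKernel).stronglyMeasurable.integral_prod_right.measurable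

lemma volume_support_pos (hγ : IsSlab γ) : 0 < volume (Function.support γ) :=
  (integral_pos_iff_support_of_nonneg hγ.nonneg hγ.integrable).1
    (hγ.integral_eq_one ▸ one_pos)

lemma conv_pos (hγ : IsSlab γ) (x : ℝ) : 0 < conv γ x := by
  rw [conv_eq_integral_slabKernel, integral_pos_iff_support_of_nonneg (hγ.slabKernel_nonneg x)
    (hγ.integrable_slabKernel x)]
  refine hγ.volume_support_pos.trans_le (measure_mono fun u hu => ?_)
  exact mul_ne_zero (phi_pos _).ne' hu

lemma conv_le_one (hγ : IsSlab γ) (x : ℝ) : conv γ x ≤ 1 := by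
  rw [← hγ.integral_eq_one]
  exact integral_mono (hγ.integrable_slabKernel x) hγ.integrable fun u =>
    mul_le_of_le_one_left (hγ.nonneg u) (phi_le_one _)

lemma slabMoment_nonneg (hγ : IsSlab γ) (μ x : ℝ) : 0 ≤ slabMoment γ μ x :=
  integral_nonneg fun u => mul_nonneg (sq_nonneg _) (hγ.slabKernel_nonneg x u)

lemma slabMoment_pos (hγ : IsSlab γ) (μ x : ℝ) : 0 < slabMoment γ μ x := by
  rw [slabMoment, integral_pos_iff_support_of_nonneg
    (fun u => mul_nonneg (sq_nonneg _) (hγ.slabKernel_nonneg x u))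
    (hγ.integrable_sq_sub_mul_slabKernel μ x)]
  have hpos : 0 < volume (Function.support γ \ {μ}) := by
    rw [measure_sdiff_null (measure_singleton μ)]
    exact hγ.volume_support_pos
  refine hpos.trans_le (measure_mono fun u hu => ?_)
  exact mul_ne_zero (pow_ne_zero 2 (sub_ne_zero.2 hu.2)) (mul_ne_zero (phi_pos _).ne' hu.1)

lemma integrable_cosh_mul_mul_slabKernel (hγ : IsSlab γ) {q : ℝ → ℝ} (hq : q.Even) {x : ℝ}
    (hi : Integrable fun u => q u * slabKernel γ x u) :
    Integrable fun u => cosh (x * u) * (q u * slabKernel γ 0 u) := by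
  refine integrable_cosh_mul_of_even (hq.mul_even hγ.slabKernel_zero_even) ?_
  refine (hi.const_mul (exp (-x ^ 2 / 2))⁻¹).congr (.of_forall fun u => ?_)
  simp only [slabKernel_eq_exp_mul γ x u, Pi.mul_apply]
  field_simp

lemma integrable_cosh_mul_slabKernel (hγ : IsSlab γ) (x : ℝ) :
    Integrable fun u => cosh (x * u) * slabKernel γ 0 u := by
  simpa only [one_mul] using hγ.integrable_cosh_mul_mul_slabKernel (q := fun _ => 1)
    (fun _ => rfl) (by simpa only [one_mul] using hγ.integrable_slabKernel x)

lemma integral_mul_slabKernel_eq_integral_cosh (hγ : IsSlab γ) {q : ℝ → ℝ} (hq : q.Even) {x : ℝ}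
    (hi : Integrable fun u => q u * slabKernel γ x u) :
    ∫ u, q u * slabKernel γ x u =
      exp (-x ^ 2 / 2) * ∫ u, cosh (x * u) * (q u * slabKernel γ 0 u) := by
  have hfactor : ∀ u, q u * slabKernel γ x u =
      exp (-x ^ 2 / 2) * (exp (x * u) * (q u * slabKernel γ 0 u)) := fun u => by
    rw [slabKernel_eq_exp_mul]; ring
  simp_rw [hfactor] at hi ⊢
  rw [integral_const_mul]
  congr 1
  exact integral_exp_mul_eq_integral_cosh_mul (hq.mul_even hγ.slabKernel_zero_even)
    ((integrable_const_mul_iff (exp_pos _).ne'.isUnit _).1 hi)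

lemma conv_eq_integral_cosh (hγ : IsSlab γ) (x : ℝ) :
    conv γ x = exp (-x ^ 2 / 2) * ∫ u, cosh (x * u) * slabKernel γ 0 u := by
  rw [conv_eq_integral_slabKernel]
  simpa only [one_mul] using hγ.integral_mul_slabKernel_eq_integral_cosh (q := fun _ => 1)
    (fun _ => rfl) (by simpa only [one_mul] using hγ.integrable_slabKernel x)

lemma exp_mul_add_le_conv (hγ : IsSlab γ) (x : ℝ) :
    exp (-x ^ 2 / 2) * (x ^ 2 / 2 * slabMoment γ 0 0 + conv γ 0) ≤ conv γ x := by
  have hsq := (hγ.integrable_sq_sub_mul_slabKernel 0 0).const_mul (x ^ 2 / 2)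
  rw [hγ.conv_eq_integral_cosh x, slabMoment, conv_eq_integral_slabKernel, ← integral_const_mul,
    ← integral_add hsq (hγ.integrable_slabKernel 0)]
  gcongr ?_ * ?_
  refine integral_mono (hsq.add (hγ.integrable_slabKernel 0))
    (hγ.integrable_cosh_mul_slabKernel x) fun u => ?_
  calc x ^ 2 / 2 * ((u - 0) ^ 2 * slabKernel γ 0 u) + slabKernel γ 0 u
      = ((x * u) ^ 2 / 2 + 1) * slabKernel γ 0 u := by ring
    _ ≤ cosh (x * u) * slabKernel γ 0 u :=
      mul_le_mul_of_nonneg_right (sq_div_two_add_one_le_cosh _) (hγ.slabKernel_nonneg 0 u)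

lemma conv_zero_mul_exp_le_conv (hγ : IsSlab γ) (x : ℝ) :
    conv γ 0 * exp (-x ^ 2 / 2) ≤ conv γ x := by
  have hmom : 0 ≤ x ^ 2 / 2 * slabMoment γ 0 0 :=
    mul_nonneg (by positivity) (hγ.slabMoment_nonneg 0 0)
  nlinarith [hγ.exp_mul_add_le_conv x, exp_pos (-x ^ 2 / 2)]

/- Both `u ^ 2` and `cosh (x * u)` increase with `|u|`, so tilting the slab posterior at `0` by the
latter increases the mean of the former. -/
lemma slabMoment_zero_div_conv_zero_le (hγ : IsSlab γ) (x : ℝ) :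
    slabMoment γ 0 0 / conv γ 0 ≤ slabMoment γ 0 x / conv γ x := by
  have hsq : (fun u : ℝ => u ^ 2).Even := fun u => neg_sq u
  have hi := hγ.integrable_slabKernel
  have hi2 : ∀ y, Integrable fun u => u ^ 2 * slabKernel γ y u := fun y => by
    simpa only [sub_zero] using hγ.integrable_sq_sub_mul_slabKernel 0 y
  have hsqcosh : Integrable fun u => u ^ 2 * cosh (x * u) * slabKernel γ 0 u :=
    (hγ.integrable_cosh_mul_mul_slabKernel hsq (hi2 x)).congr (.of_forall fun u => by ring_nf)
  have hmom : slabMoment γ 0 x =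
      exp (-x ^ 2 / 2) * ∫ u, u ^ 2 * cosh (x * u) * slabKernel γ 0 u := by
    simp only [slabMoment, sub_zero, hγ.integral_mul_slabKernel_eq_integral_cosh hsq (hi2 x)]
    congr 2; ext u; ring
  rw [div_le_div_iff₀ (hγ.conv_pos 0) (hγ.conv_pos x), hmom, hγ.conv_eq_integral_cosh x,
    conv_eq_integral_slabKernel]
  have hassoc := integral_mul_integral_le_of_monovary (hγ.slabKernel_nonneg 0)
    (monovary_sq_cosh_mul x) (hi 0) (hi2 0) (hγ.integrable_cosh_mul_slabKernel x) hsqcosh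
  simp only [slabMoment, sub_zero]
  nlinarith [exp_pos (-x ^ 2 / 2)]

/- Integrate `t ≤ G * exp t - 1 - log G` with `t = (x - u) ^ 2 / 4` and `G = conv γ x` against
the slab posterior. -/
lemma slabMoment_self_le (hγ : IsSlab γ) (x : ℝ) :
    slabMoment γ x x ≤ -4 * log (conv γ x) * conv γ x := by
  set G := conv γ x with hG
  have hGpos : 0 < G := hγ.conv_pos x
  have hpoint : ∀ u, (u - x) ^ 2 * slabKernel γ x u ≤
      4 * (G * γ u) - 4 * (1 + log G) * slabKernel γ x u := fun u => by
    have hlog : (x - u) ^ 2 / 4 ≤ G * exp ((x - u) ^ 2 / 4) - 1 - log G := by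
      have h := log_le_sub_one_of_pos (mul_pos hGpos (exp_pos ((x - u) ^ 2 / 4)))
      rw [log_mul hGpos.ne' (exp_pos _).ne', log_exp] at h
      linarith
    have hexp : exp ((x - u) ^ 2 / 4) * slabKernel γ x u ≤ γ u := by
      rw [slabKernel, ← mul_assoc]
      exact mul_le_of_le_one_left (hγ.nonneg u) (exp_sq_div_four_mul_phi_le_one _)
    nlinarith [mul_le_mul_of_nonneg_right hlog (hγ.slabKernel_nonneg x u),
      mul_le_mul_of_nonneg_left hexp hGpos.le]
  have hγi := (hγ.integrable.const_mul G).const_mul 4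
  have hki := (hγ.integrable_slabKernel x).const_mul (4 * (1 + log G))
  calc slabMoment γ x x
      ≤ ∫ u, (4 * (G * γ u) - 4 * (1 + log G) * slabKernel γ x u) :=
        integral_mono (hγ.integrable_sq_sub_mul_slabKernel x x) (hγi.sub hki) hpoint
    _ = 4 * (G * ∫ u, γ u) - 4 * (1 + log G) * G := by
        rw [integral_sub hγi hki, integral_const_mul, integral_const_mul, integral_const_mul,
          hG, conv_eq_integral_slabKernel]
    _ = -4 * log G * G := by rw [hγ.integral_eq_one]; ring

lemma slabMoment_le_slabMoment_self (hγ : IsSlab γ) (μ x : ℝ) :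
    slabMoment γ μ x ≤ 2 * slabMoment γ x x + 2 * (x - μ) ^ 2 * conv γ x := by
  have hsq := (hγ.integrable_sq_sub_mul_slabKernel x x).const_mul 2
  have hker := (hγ.integrable_slabKernel x).const_mul (2 * (x - μ) ^ 2)
  rw [conv_eq_integral_slabKernel, slabMoment, slabMoment, ← integral_const_mul,
    ← integral_const_mul, ← integral_add hsq hker]
  refine integral_mono (hγ.integrable_sq_sub_mul_slabKernel μ x) (hsq.add hker) fun u => ?_
  have hker0 := hγ.slabKernel_nonneg x u
  nlinarith [mul_nonneg (sq_nonneg ((u - x) - (x - μ))) hker0]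

lemma slabMoment_div_conv_le (hγ : IsSlab γ) (μ x : ℝ) :
    slabMoment γ μ x / conv γ x ≤ 4 * x ^ 2 - 8 * log (conv γ 0) + 2 * (x - μ) ^ 2 := by
  have hlog : log (conv γ 0) - x ^ 2 / 2 ≤ log (conv γ x) := by
    have h := log_le_log (mul_pos (hγ.conv_pos 0) (exp_pos _)) (hγ.conv_zero_mul_exp_le_conv x)
    rw [log_mul (hγ.conv_pos 0).ne' (exp_pos _).ne', log_exp] at h
    linarith
  rw [div_le_iff₀ (hγ.conv_pos x)]
  nlinarith [hγ.slabMoment_le_slabMoment_self μ x, hγ.slabMoment_self_le x,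
    mul_le_mul_of_nonneg_right hlog (hγ.conv_pos x).le]

end IsSlab

end SlabPosteriorMoments

/-- The marginal density of one observation under the prior of weight `α`. -/
def marginal (γ : ℝ → ℝ) (α x : ℝ) : ℝ := (1 - α) * phi x + α * conv γ x

/-- The likelihood ratio of a null observation, of density `phi`, against `marginal γ β`. -/
def nullRatio (γ : ℝ → ℝ) (β x : ℝ) : ℝ := phi x / marginal γ β x

section Marginal

variable {γ : ℝ → ℝ} {α β : ℝ}

lemma marginal_eq_phi_add (γ : ℝ → ℝ) (α x : ℝ) :
    marginal γ α x = phi x + α * (conv γ x - phi x) := by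
  unfold marginal; ring

lemma integrable_phi_mul_exp_abs : Integrable fun v => phi v * exp |v| := by
  refine ((integrable_exp_neg_mul_sq (b := 1 / 4) (by norm_num)).const_mul (exp 1)).mono'
    (by fun_prop) (.of_forall fun v => ?_)
  rw [norm_of_nonneg (mul_nonneg (phi_pos v).le (exp_pos _).le)]
  calc phi v * exp |v| ≤ exp (-v ^ 2 / 2) * exp |v| := by gcongr; exact phi_le_exp v
    _ = exp (-v ^ 2 / 2 + |v|) := (exp_add _ _).symm
    _ ≤ exp (1 + -(1 / 4) * v ^ 2) :=
        exp_le_exp.2 (by nlinarith [sq_nonneg (|v| - 2), sq_abs v])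
    _ = exp 1 * exp (-(1 / 4) * v ^ 2) := exp_add _ _

lemma conv_eq_convolution (γ : ℝ → ℝ) :
    conv γ = convolution γ phi (ContinuousLinearMap.mul ℝ ℝ) volume := by
  ext x
  simp only [conv, convolution, ContinuousLinearMap.mul_apply', mul_comm (γ _)]

namespace IsSlab

lemma integrable_conv (hγ : IsSlab γ) : Integrable (conv γ) := by
  rw [conv_eq_convolution]
  exact hγ.integrable.integrable_convolution _ integrable_phi

lemma integral_conv (hγ : IsSlab γ) : ∫ x, conv γ x = 1 := by
  rw [conv_eq_convolution, integral_convolution _ hγ.integrable integrable_phi,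
    hγ.integral_eq_one, integral_phi, ContinuousLinearMap.mul_apply', one_mul]

lemma conv_le_exp_neg_abs (hγ : IsSlab γ) {C : ℝ} (hC : ∀ u, γ u ≤ C * exp (-|u|)) (x : ℝ) :
    conv γ x ≤ C * (∫ v, phi v * exp |v|) * exp (-|x|) := by
  have hC0 : 0 ≤ C := by
    have := (hγ.nonneg 0).trans (hC 0)
    rwa [abs_zero, neg_zero, exp_zero, mul_one] at this
  calc conv γ x
      ≤ ∫ u, C * exp (-|x|) * (phi (x - u) * exp |x - u|) := by
        refine integral_mono (hγ.integrable_slabKernel x)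
          ((integrable_phi_mul_exp_abs.comp_sub_left x).const_mul _) fun u => ?_
        calc phi (x - u) * γ u ≤ phi (x - u) * (C * exp (-|u|)) := by
              gcongr
              · exact (phi_pos _).le
              · exact hC u
          _ ≤ phi (x - u) * (C * exp (-|x| + |x - u|)) := by
              have := (phi_pos (x - u)).le
              have := abs_sub_abs_le_abs_sub x u
              gcongr
              linarith
          _ = C * exp (-|x|) * (phi (x - u) * exp |x - u|) := by rw [exp_add]; ring
    _ = C * exp (-|x|) * ∫ v, phi v * exp |v| := by
        rw [integral_const_mul, integral_sub_left_eq_self (fun v => phi v * exp |v|)]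
    _ = _ := by ring

lemma exists_abs_conv_sub_phi_le (hγ : IsSlab γ) {C : ℝ} (hC : ∀ u, γ u ≤ C * exp (-|u|)) :
    ∃ K, 0 ≤ K ∧ ∀ x, |conv γ x - phi x| ≤ K * exp (-|x|) := by
  refine ⟨C * (∫ v, phi v * exp |v|) + exp (1 / 2), ?_, fun x => ?_⟩
  · have h := (hγ.conv_pos 0).le.trans (hγ.conv_le_exp_neg_abs hC 0)
    rw [abs_zero, neg_zero, exp_zero, mul_one] at h
    positivity
  · have hphi : phi x ≤ exp (1 / 2) * exp (-|x|) :=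
      calc phi x ≤ exp (-x ^ 2 / 2) := phi_le_exp x
        _ ≤ exp (1 / 2 + -|x|) := by
            gcongr
            nlinarith [sq_nonneg (|x| - 1), sq_abs x]
        _ = _ := exp_add _ _
    have hconv := hγ.conv_le_exp_neg_abs hC x
    rw [abs_le, add_mul]
    constructor <;> linarith [phi_pos x, hγ.conv_pos x]

lemma marginal_pos (hγ : IsSlab γ) (hα : α ∈ Icc 0 1) (x : ℝ) : 0 < marginal γ α x :=
  convex_Ioi (0 : ℝ) (phi_pos x) (hγ.conv_pos x) (sub_nonneg.2 hα.2) hα.1 (sub_add_cancel 1 α)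

lemma measurable_uncurry_marginal (hγ : IsSlab γ) : Measurable (Function.uncurry (marginal γ)) :=
  ((measurable_const.sub measurable_fst).mul (continuous_phi.measurable.comp measurable_snd)).add
    (measurable_fst.mul (hγ.measurable_conv.comp measurable_snd))

lemma measurable_nullRatio (hγ : IsSlab γ) (β : ℝ) : Measurable (nullRatio γ β) :=
  continuous_phi.measurable.div hγ.measurable_uncurry_marginal.of_uncurry_left

lemma nullRatio_nonneg (hγ : IsSlab γ) (hβ : β ∈ Icc 0 1) (x : ℝ) : 0 ≤ nullRatio γ β x :=
  div_nonneg (phi_pos x).le (hγ.marginal_pos hβ x).le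

lemma nullRatio_le (hγ : IsSlab γ) (hβ : β ∈ Ico 0 1) (x : ℝ) :
    nullRatio γ β x ≤ (1 - β)⁻¹ := by
  have hle : (1 - β) * phi x ≤ marginal γ β x :=
    le_add_of_nonneg_right (mul_nonneg hβ.1 (hγ.conv_pos x).le)
  rw [nullRatio, inv_eq_one_div, div_le_div_iff₀ (hγ.marginal_pos ⟨hβ.1, hβ.2.le⟩ x)
    (sub_pos.2 hβ.2)]
  linarith

lemma norm_nullRatio_le (hγ : IsSlab γ) (hβ : β ∈ Ico 0 1) (x : ℝ) :
    ‖nullRatio γ β x‖ ≤ (1 - β)⁻¹ := by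
  rw [norm_of_nonneg (hγ.nullRatio_nonneg ⟨hβ.1, hβ.2.le⟩ x)]
  exact hγ.nullRatio_le hβ x

lemma integrable_nullRatio (hγ : IsSlab γ) (hβ : β ∈ Ico 0 1) (μ : Measure ℝ)
    [IsFiniteMeasure μ] : Integrable (nullRatio γ β) μ :=
  .of_bound (hγ.measurable_nullRatio β).aestronglyMeasurable _
    (.of_forall (hγ.norm_nullRatio_le hβ))

lemma marginal_div_marginal_two_mul (hγ : IsSlab γ) (hα : 2 * α ∈ Icc 0 1) (x : ℝ) :
    marginal γ α x / marginal γ (2 * α) x = (1 + nullRatio γ (2 * α) x) / 2 := by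
  rw [nullRatio, div_eq_iff (hγ.marginal_pos hα x).ne']
  field_simp [(hγ.marginal_pos hα x).ne']
  unfold marginal
  ring

end IsSlab

end Marginal

/-- The weight `α = (s / n) exp r`, with `r = √(log (n / s))` and hence `s / n = exp (-r ^ 2)`,
which the empirical Bayes weight exceeds with probability bounded below. -/
def criticalWeight (r : ℝ) : ℝ := exp (-r ^ 2 + r)

section NullCoordinate

variable {γ : ℝ → ℝ}

lemma two_mul_criticalWeight_mem_Ioc {r : ℝ} (hr : 3 ≤ r) :
    2 * criticalWeight r ∈ Ioc 0 (1 / 2) := by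
  refine ⟨mul_pos two_pos (exp_pos _), ?_⟩
  have hle : criticalWeight r ≤ (exp 3)⁻¹ := by
    rw [← exp_neg]
    exact exp_le_exp.2 (by nlinarith)
  have hinv : (exp 3)⁻¹ ≤ 4⁻¹ := inv_anti₀ (by norm_num) (by linarith [add_one_le_exp (3 : ℝ)])
  linarith

/- Second order expansion of `p / (1 + t)` at `t = 0`, with `t = β (q - p) / p`. -/
lemma sq_div_add_eq {p q β : ℝ} (hd : p + β * (q - p) ≠ 0) :
    p ^ 2 / (p + β * (q - p)) =
      p - β * (q - p) + (β * (q - p)) ^ 2 / (p + β * (q - p)) := by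
  field_simp
  ring

lemma sq_div_add_le_sq_div {p q β : ℝ} (hp : 0 < p) (hq : 0 < q) (hβ : β ∈ Ioc 0 (1 / 2)) :
    (β * (q - p)) ^ 2 / (p + β * (q - p)) ≤ 2 * (β * (q - p)) ^ 2 / p := by
  have hhalf : p / 2 ≤ p + β * (q - p) := by nlinarith [hβ.1, hβ.2, mul_pos hβ.1 hq]
  calc (β * (q - p)) ^ 2 / (p + β * (q - p)) ≤ (β * (q - p)) ^ 2 / (p / 2) := by gcongr
    _ = 2 * (β * (q - p)) ^ 2 / p := by field_simp

lemma sq_div_add_le_abs {p q β : ℝ} (hp : 0 < p) (hq : 0 < q) (hβ : β ∈ Ioc 0 (1 / 2)) :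
    (β * (q - p)) ^ 2 / (p + β * (q - p)) ≤ β * |q - p| := by
  have hd : β * |q - p| ≤ p + β * (q - p) := by
    rcases abs_cases (q - p) with ⟨h, _⟩ | ⟨h, _⟩ <;> rw [h] <;>
      nlinarith [hβ.1, hβ.2, mul_pos hβ.1 hq]
  have hd0 : 0 < p + β * (q - p) := by nlinarith [hβ.1, hβ.2, mul_pos hβ.1 hq]
  rw [div_le_iff₀ hd0]
  calc (β * (q - p)) ^ 2 = β * |q - p| * (β * |q - p|) := by rw [mul_pow, ← sq_abs (q - p)]; ring
    _ ≤ β * |q - p| * (p + β * (q - p)) :=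
      mul_le_mul_of_nonneg_left hd (mul_nonneg hβ.1.le (abs_nonneg _))

lemma sq_criticalWeight_mul_div_phi_le {r K δ x : ℝ} (hr : 10 ≤ r) (hx : |x| ≤ 5 / 4 * r)
    (hδ : |δ| ≤ K * exp (-|x|)) :
    2 * (2 * criticalWeight r * δ) ^ 2 / phi x ≤
      8 * K ^ 2 * √(2 * π) * exp (-r ^ 2 - r / 9 + -(1 / 9) * |x|) := by
  have hδ2 : δ ^ 2 ≤ (K * exp (-|x|)) ^ 2 := sq_le_sq.2 (hδ.trans (le_abs_self _))
  have hexp : 2 * (-r ^ 2 + r) + 2 * (-|x|) + |x| ^ 2 / 2 ≤ -r ^ 2 - r / 9 + -(1 / 9) * |x| := by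
    nlinarith [abs_nonneg x]
  calc 2 * (2 * criticalWeight r * δ) ^ 2 / phi x
      = 8 * √(2 * π) * (criticalWeight r ^ 2 * δ ^ 2 * exp (|x| ^ 2 / 2)) := by
        rw [phi, sq_abs, show -x ^ 2 / 2 = -(x ^ 2 / 2) by ring, exp_neg]
        field_simp
        ring
    _ ≤ 8 * √(2 * π) * (criticalWeight r ^ 2 * (K * exp (-|x|)) ^ 2 * exp (|x| ^ 2 / 2)) := by
        gcongr
    _ = 8 * K ^ 2 * √(2 * π) * exp (2 * (-r ^ 2 + r) + 2 * (-|x|) + |x| ^ 2 / 2) := by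
        rw [criticalWeight, exp_add (_ + _), exp_add (2 * _), two_mul (_ + r), two_mul (-|x|),
          exp_add (_ + _), exp_add (-|x|)]
        ring
    _ ≤ _ := by gcongr

namespace IsSlab

/- The chi-square bound wins where `phi` is not too small, the linear bound further out; both
exponents beat `-r ^ 2` by a multiple of `r + |x|` when the split is made at `5 r / 4`. -/
lemma exists_remainder_le {K : ℝ} (hγ : IsSlab γ) (hK : 0 ≤ K)
    (hbound : ∀ x, |conv γ x - phi x| ≤ K * exp (-|x|)) :
    ∃ L, ∀ r, 10 ≤ r → ∀ x,
      (2 * criticalWeight r * (conv γ x - phi x)) ^ 2 / marginal γ (2 * criticalWeight r) x ≤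
        L * exp (-r ^ 2 - r / 9 + -(1 / 9) * |x|) := by
  refine ⟨8 * K ^ 2 * √(2 * π) + 2 * K, fun r hr x => ?_⟩
  have hβ := two_mul_criticalWeight_mem_Ioc (by linarith : 3 ≤ r)
  rw [marginal_eq_phi_add]
  rcases le_total |x| (5 / 4 * r) with hx | hx
  · calc _ ≤ _ := sq_div_add_le_sq_div (phi_pos x) (hγ.conv_pos x) hβ
      _ ≤ _ := sq_criticalWeight_mul_div_phi_le hr hx (hbound x)
      _ ≤ _ := by gcongr; linarith
  · calc _ ≤ _ := sq_div_add_le_abs (phi_pos x) (hγ.conv_pos x) hβ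
      _ ≤ 2 * criticalWeight r * (K * exp (-|x|)) :=
        mul_le_mul_of_nonneg_left (hbound x) hβ.1.le
      _ = 2 * K * exp (-r ^ 2 + r + -|x|) := by rw [criticalWeight, exp_add (_ + r)]; ring
      _ ≤ (8 * K ^ 2 * √(2 * π) + 2 * K) * exp (-r ^ 2 - r / 9 + -(1 / 9) * |x|) := by
        gcongr ?_ * ?_
        · linarith [show 0 ≤ 8 * K ^ 2 * √(2 * π) by positivity]
        · exact exp_le_exp.2 (by linarith)

lemma integral_nullRatio_eq (hγ : IsSlab γ) {β : ℝ} (hβ : β ∈ Ico 0 1) :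
    ∫ x, nullRatio γ β x ∂(ProbabilityTheory.gaussianReal 0 1) =
      1 + ∫ x, (β * (conv γ x - phi x)) ^ 2 / marginal γ β x := by
  have hexpand : ∀ x, phi x * nullRatio γ β x =
      phi x - β * (conv γ x - phi x) + (β * (conv γ x - phi x)) ^ 2 / marginal γ β x := fun x => by
    have hd := (hγ.marginal_pos ⟨hβ.1, hβ.2.le⟩ x).ne'
    rw [marginal_eq_phi_add] at hd
    rw [nullRatio, marginal_eq_phi_add, ← sq_div_add_eq hd]
    ring
  have hdiff : Integrable fun x => β * (conv γ x - phi x) :=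
    (hγ.integrable_conv.sub integrable_phi).const_mul β
  have hlin : Integrable fun x => phi x - β * (conv γ x - phi x) := integrable_phi.sub hdiff
  have hratio : Integrable fun x => phi x * nullRatio γ β x :=
    integrable_phi.mul_bdd (c := (1 - β)⁻¹) (hγ.measurable_nullRatio β).aestronglyMeasurable
      (.of_forall (hγ.norm_nullRatio_le hβ))
  have hrem : Integrable fun x => (β * (conv γ x - phi x)) ^ 2 / marginal γ β x :=
    (hratio.sub hlin).congr (.of_forall fun x => by
      simp only [Pi.sub_apply, hexpand x, add_sub_cancel_left])
  rw [integral_gaussianReal_zero_one]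
  simp_rw [hexpand]
  rw [integral_add hlin hrem, integral_sub integrable_phi hdiff, integral_const_mul,
    integral_sub hγ.integrable_conv integrable_phi, hγ.integral_conv, integral_phi, sub_self,
    mul_zero, sub_zero]

lemma eventually_integral_nullRatio_le (hγ : IsSlab γ) {C : ℝ}
    (hC : ∀ u, γ u ≤ C * exp (-|u|)) :
    ∀ᶠ r in Filter.atTop,
      ∫ x, nullRatio γ (2 * criticalWeight r) x ∂(ProbabilityTheory.gaussianReal 0 1) ≤
        1 + exp (-r ^ 2) / 4 := by
  obtain ⟨K, hK, hbound⟩ := hγ.exists_abs_conv_sub_phi_le hC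
  obtain ⟨L, hrem⟩ := hγ.exists_remainder_le hK hbound
  have hdecay : Filter.Tendsto (fun r : ℝ => 18 * L * exp (-(r / 9))) Filter.atTop (nhds 0) := by
    simpa only [mul_zero, Function.comp_apply, id_eq] using (tendsto_exp_neg_atTop_nhds_zero.comp
      (Filter.tendsto_id.atTop_div_const (by norm_num : (0 : ℝ) < 9))).const_mul (18 * L)
  filter_upwards [hdecay.eventually_le_const (by norm_num : (0 : ℝ) < 1 / 4),
    Filter.eventually_ge_atTop 10] with r hsmall hr
  have hβ := two_mul_criticalWeight_mem_Ioc (by linarith : 3 ≤ r)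
  have hβ' : 2 * criticalWeight r ∈ Ico 0 1 := ⟨hβ.1.le, hβ.2.trans_lt (by norm_num)⟩
  have hexp := integrable_exp_neg_mul_abs (by norm_num : (0 : ℝ) < 1 / 9)
  rw [hγ.integral_nullRatio_eq hβ']
  gcongr
  calc ∫ x, (2 * criticalWeight r * (conv γ x - phi x)) ^ 2 / marginal γ (2 * criticalWeight r) x
      ≤ ∫ x, L * exp (-r ^ 2 - r / 9) * exp (-(1 / 9) * |x|) := by
        refine integral_mono_of_nonneg (.of_forall fun x => ?_) (hexp.const_mul _)
          (.of_forall fun x => ?_)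
        · exact div_nonneg (sq_nonneg _) (hγ.marginal_pos ⟨hβ'.1, hβ'.2.le⟩ x).le
        · exact (hrem r hr x).trans_eq (by rw [exp_add, ← mul_assoc])
    _ = exp (-r ^ 2) * (18 * L * exp (-(r / 9))) := by
        rw [integral_const_mul, integral_exp_neg_mul_abs (by norm_num), sub_eq_add_neg, exp_add]
        ring
    _ ≤ exp (-r ^ 2) * (1 / 4) := by gcongr
    _ = exp (-r ^ 2) / 4 := by ring

end IsSlab

end NullCoordinate

section SignalCoordinate

variable {γ : ℝ → ℝ} {β : ℝ}

namespace IsSlab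

lemma nullRatio_le_div_sq (hγ : IsSlab γ) (hβ : β ∈ Ioc 0 1) {x : ℝ} (hx : x ≠ 0) :
    nullRatio γ β x ≤ 2 / (β * slabMoment γ 0 0) / x ^ 2 := by
  have hm := hγ.slabMoment_pos 0 0
  have hβ0 := hβ.1
  have hmarg : β * (exp (-x ^ 2 / 2) * (x ^ 2 / 2 * slabMoment γ 0 0)) ≤ marginal γ β x := by
    have hconv : exp (-x ^ 2 / 2) * (x ^ 2 / 2 * slabMoment γ 0 0) ≤ conv γ x :=
      le_trans (by gcongr; linarith [hγ.conv_pos 0]) (hγ.exp_mul_add_le_conv x)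
    have hnull : 0 ≤ (1 - β) * phi x := mul_nonneg (sub_nonneg.2 hβ.2) (phi_pos x).le
    unfold marginal
    linarith [mul_le_mul_of_nonneg_left hconv hβ0.le]
  calc nullRatio γ β x
      ≤ exp (-x ^ 2 / 2) / (β * (exp (-x ^ 2 / 2) * (x ^ 2 / 2 * slabMoment γ 0 0))) := by
        unfold nullRatio
        gcongr
        exact phi_le_exp x
    _ = 2 / (β * slabMoment γ 0 0) / x ^ 2 := by field_simp

lemma tendsto_nullRatio_atTop (hγ : IsSlab γ) (hβ : β ∈ Ioc 0 1) :
    Filter.Tendsto (nullRatio γ β) Filter.atTop (nhds 0) := by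
  refine squeeze_zero' (.of_forall (hγ.nullRatio_nonneg (Ioc_subset_Icc_self hβ)))
    ((Filter.eventually_ne_atTop 0).mono fun x hx => hγ.nullRatio_le_div_sq hβ hx) ?_
  exact tendsto_const_nhds.div_atTop (Filter.tendsto_pow_atTop two_ne_zero)

lemma tendsto_integral_nullRatio_atTop (hγ : IsSlab γ) (hβ : β ∈ Ioo 0 1) :
    Filter.Tendsto (fun M => ∫ x, nullRatio γ β x ∂(ProbabilityTheory.gaussianReal M 1))
      Filter.atTop (nhds 0) := by
  simp_rw [integral_gaussianReal_eq_integral_add (nullRatio γ β)]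
  have hlim := tendsto_integral_filter_of_dominated_convergence
    (μ := ProbabilityTheory.gaussianReal 0 1) (l := Filter.atTop)
    (F := fun M x => nullRatio γ β (x + M)) (f := fun _ => 0) (fun _ => (1 - β)⁻¹)
    (.of_forall fun M => ((hγ.measurable_nullRatio β).comp
      (measurable_id.add_const M)).aestronglyMeasurable)
    (.of_forall fun M => .of_forall fun x => hγ.norm_nullRatio_le (Ioo_subset_Ico_self hβ) _)
    (integrable_const _)
    (.of_forall fun x => (hγ.tendsto_nullRatio_atTop (Ioo_subset_Ioc_self hβ)).comp
      (Filter.tendsto_atTop_add_const_left _ x Filter.tendsto_id))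
  simpa only [integral_zero] using hlim

end IsSlab

end SignalCoordinate

section MarginalLikelihood

variable {γ : ℝ → ℝ} {n : ℕ} {α αn : ℝ} {hahat : (Fin n → ℝ) → ℝ}

instance isProbabilityMeasure_Pdata (θ : Fin n → ℝ) : IsProbabilityMeasure (Pdata n θ) := by
  unfold Pdata; infer_instance

lemma logMarg_eq_sum_log_marginal (γ : ℝ → ℝ) (α : ℝ) (X : Fin n → ℝ) :
    logMarg γ α X = ∑ i, log (marginal γ α (X i)) := rfl

lemma IsSlab.concaveOn_logMarg (hγ : IsSlab γ) (X : Fin n → ℝ) :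
    ConcaveOn ℝ (Icc 0 1) fun α => logMarg γ α X := by
  refine ⟨convex_Icc 0 1, fun α hα β hβ p q hp hq hpq => ?_⟩
  simp only [logMarg_eq_sum_log_marginal, smul_eq_mul, Finset.mul_sum, ← Finset.sum_add_distrib]
  refine Finset.sum_le_sum fun i _ => ?_
  have hmix : marginal γ (p * α + q * β) (X i) =
      p * marginal γ α (X i) + q * marginal γ β (X i) := by
    simp only [marginal_eq_phi_add]
    linear_combination -hpq * phi (X i)
  rw [hmix]
  exact strictConcaveOn_log_Ioi.concaveOn.2 (hγ.marginal_pos hα _) (hγ.marginal_pos hβ _) hp hq hpq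

namespace IsMMLE

lemma mem_Icc (h : IsMMLE γ αn hahat) (hαn : 0 ≤ αn) (X : Fin n → ℝ) : hahat X ∈ Icc 0 1 :=
  Icc_subset_Icc_left hαn (h.2 X).1

lemma logMarg_two_mul_le (h : IsMMLE γ αn hahat) (hγ : IsSlab γ) (hαn : 0 ≤ αn) (hα : 2 * α ≤ 1)
    {X : Fin n → ℝ} (hX : hahat X < α) : logMarg γ (2 * α) X ≤ logMarg γ α X := by
  have hpos : 0 ≤ α := (h.mem_Icc hαn X).1.trans hX.le
  have hmax := (h.2 X).2 α ⟨(h.2 X).1.1.trans hX.le, by linarith⟩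
  exact (hγ.concaveOn_logMarg X).right_le_of_le_left'' (h.mem_Icc hαn X) ⟨by linarith, hα⟩ hX
    (by linarith) hmax

lemma one_le_prod_of_lt (h : IsMMLE γ αn hahat) (hγ : IsSlab γ) (hαn : 0 ≤ αn) (hα : 2 * α ≤ 1)
    {X : Fin n → ℝ} (hX : hahat X < α) : 1 ≤ ∏ i, (1 + nullRatio γ (2 * α) (X i)) / 2 := by
  have hpos : 0 ≤ α := (h.mem_Icc hαn X).1.trans hX.le
  have h2α : 2 * α ∈ Icc 0 1 := ⟨by linarith, hα⟩
  have hnum := fun i => hγ.marginal_pos ⟨hpos, by linarith⟩ (X i)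
  have hden := fun i => hγ.marginal_pos h2α (X i)
  have hle := h.logMarg_two_mul_le hγ hαn hα hX
  rw [logMarg_eq_sum_log_marginal, logMarg_eq_sum_log_marginal,
    ← log_prod fun i _ => (hden i).ne', ← log_prod fun i _ => (hnum i).ne',
    log_le_log_iff (Finset.prod_pos fun i _ => hden i) (Finset.prod_pos fun i _ => hnum i)] at hle
  simp_rw [← hγ.marginal_div_marginal_two_mul h2α]
  rwa [Finset.prod_div_distrib, one_le_div (Finset.prod_pos fun i _ => hden i)]

lemma measureReal_lt_le_prod (h : IsMMLE γ αn hahat) (hγ : IsSlab γ) (hαn : 0 ≤ αn)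
    (hα : 2 * α ∈ Ico 0 1) (θ : Fin n → ℝ) :
    (Pdata n θ).real {X | hahat X < α} ≤
      ∏ i, (1 + ∫ x, nullRatio γ (2 * α) x ∂(ProbabilityTheory.gaussianReal (θ i) 1)) / 2 := by
  set ratio : ℝ → ℝ := fun x => (1 + nullRatio γ (2 * α) x) / 2 with hratio
  have hint : ∀ i, Integrable ratio (ProbabilityTheory.gaussianReal (θ i) 1) := fun i =>
    ((integrable_const 1).add (hγ.integrable_nullRatio hα _)).div_const 2
  have hmean : ∀ i, ∫ x, ratio x ∂(ProbabilityTheory.gaussianReal (θ i) 1) =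
      (1 + ∫ x, nullRatio γ (2 * α) x ∂(ProbabilityTheory.gaussianReal (θ i) 1)) / 2 := fun i => by
    rw [hratio, integral_div, integral_add (integrable_const 1) (hγ.integrable_nullRatio hα _),
      integral_const, probReal_univ, one_smul]
  have hnonneg : ∀ x, 0 ≤ ratio x := fun x => div_nonneg
    (add_nonneg zero_le_one (hγ.nullRatio_nonneg (Ico_subset_Icc_self hα) x)) zero_le_two
  calc (Pdata n θ).real {X | hahat X < α}
      ≤ (Pdata n θ).real {X | 1 ≤ ∏ i, ratio (X i)} :=
        measureReal_mono fun X hX => h.one_le_prod_of_lt hγ hαn hα.2.le hX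
    _ ≤ ∫ X, ∏ i, ratio (X i) ∂(Pdata n θ) := by
        simpa only [Pdata, one_mul] using mul_meas_ge_le_integral_of_nonneg
          (.of_forall fun X => Finset.prod_nonneg fun i _ => hnonneg (X i))
          (Integrable.fintype_prod (f := fun _ => ratio) hint) 1
    _ = ∏ i, ∫ x, ratio x ∂(ProbabilityTheory.gaussianReal (θ i) 1) :=
        integral_fintype_prod_eq_prod (𝕜 := ℝ) fun _ => ratio
    _ = _ := Finset.prod_congr rfl fun i _ => hmean i

end IsMMLE

end MarginalLikelihood

/-- The vector whose first `s` coordinates equal `M` and whose other coordinates vanish. -/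
def spikeVector (n s : ℕ) (M : ℝ) : Fin n → ℝ := fun i => if (i : ℕ) < s then M else 0

section SpikeVector

lemma spikeVector_mem_ell0 (n s : ℕ) (M : ℝ) : spikeVector n s M ∈ ell0 n s := by
  rw [ell0, mem_ofPred_eq, Nat.card_eq_fintype_card, Fintype.card_subtype]
  calc Finset.card {i | spikeVector n s M i ≠ 0}
      ≤ Finset.card {i : Fin n | (i : ℕ) < s} :=
        Finset.card_le_card <| Finset.monotone_filter_right _ fun i _ (hi : _ ≠ _) =>
          of_not_not fun hs => hi (if_neg hs)
    _ = min n s := Fin.card_filter_val_lt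
    _ ≤ s := min_le_right n s

lemma prod_spikeVector {n s : ℕ} (hs : s ≤ n) (M : ℝ) (f : ℝ → ℝ) :
    ∏ i, f (spikeVector n s M i) = f M ^ s * f 0 ^ (n - s) := by
  have hlt : Finset.card {i : Fin n | (i : ℕ) < s} = s :=
    Fin.card_filter_val_lt.trans (min_eq_right hs)
  have hnot : Finset.card {i : Fin n | ¬(i : ℕ) < s} = n - s := by
    rw [← Finset.compl_filter, Finset.card_compl, Fintype.card_fin, hlt]
  simp only [spikeVector, apply_ite f, Finset.prod_ite, Finset.prod_const, hlt, hnot]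

lemma pow_mul_pow_le_exp {n s : ℕ} {a b : ℝ} (hn : 0 < n) (ha0 : 0 ≤ a)
    (ha : a ≤ 3 / 4) (hb0 : 0 ≤ b) (hb : b ≤ 1 + s / (8 * n)) :
    a ^ s * b ^ (n - s) ≤ exp (-s / 8) := by
  have : (0 : ℝ) < n := Nat.cast_pos.2 hn
  have ha' : a ≤ exp (-1 / 4) := by linarith [add_one_le_exp (-1 / 4 : ℝ)]
  have hb' : b ≤ exp (s / (8 * n)) := by linarith [add_one_le_exp (s / (8 * n) : ℝ)]
  calc a ^ s * b ^ (n - s) ≤ exp (-1 / 4) ^ s * exp (s / (8 * n)) ^ (n - s) := by gcongr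
    _ ≤ exp (-1 / 4) ^ s * exp (s / (8 * n)) ^ n := by
        gcongr
        · exact one_le_exp (by positivity)
        · exact Nat.sub_le n s
    _ = exp (-s / 8) := by
        rw [← exp_nat_mul, ← exp_nat_mul, ← exp_add]
        congr 1
        field_simp
        ring

end SpikeVector

lemma IsMMLE.measureReal_lt_criticalWeight_le {γ : ℝ → ℝ} {n s : ℕ} {αn r M : ℝ}
    {hahat : (Fin n → ℝ) → ℝ} (h : IsMMLE γ αn hahat) (hγ : IsSlab γ) (hαn : 0 ≤ αn) (hs : 1 ≤ s)
    (hsn : s ≤ n) (hr : 3 ≤ r) (hrs : exp (-r ^ 2) = s / n)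
    (hnull : ∫ x, nullRatio γ (2 * criticalWeight r) x ∂(ProbabilityTheory.gaussianReal 0 1) ≤
      1 + exp (-r ^ 2) / 4)
    (hsignal : ∫ x, nullRatio γ (2 * criticalWeight r) x ∂(ProbabilityTheory.gaussianReal M 1) ≤
      1 / 2) :
    (Pdata n (spikeVector n s M)).real {X | hahat X < criticalWeight r} ≤ exp (-1 / 8) := by
  have hβ := two_mul_criticalWeight_mem_Ioc hr
  have hβ' : 2 * criticalWeight r ∈ Ico 0 1 := ⟨hβ.1.le, hβ.2.trans_lt (by norm_num)⟩
  have hnonneg : ∀ m, 0 ≤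
      ∫ x, nullRatio γ (2 * criticalWeight r) x ∂(ProbabilityTheory.gaussianReal m 1) := fun m =>
    integral_nonneg (hγ.nullRatio_nonneg (Ico_subset_Icc_self hβ'))
  refine (h.measureReal_lt_le_prod hγ hαn hβ' _).trans ?_
  rw [prod_spikeVector hsn M fun m =>
    (1 + ∫ x, nullRatio γ (2 * criticalWeight r) x ∂(ProbabilityTheory.gaussianReal m 1)) / 2]
  refine (pow_mul_pow_le_exp (hs.trans hsn) ?_ ?_ ?_ ?_).trans ?_
  · linarith [hnonneg M]
  · linarith
  · linarith [hnonneg 0]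
  · rw [hrs] at hnull
    linarith [show (s : ℝ) / (8 * n) = s / n / 4 / 2 by field_simp; norm_num]
  · have : (1 : ℝ) ≤ s := Nat.one_le_cast.2 hs
    gcongr

/-- The slab posterior `G_x`, with density proportional to `slabKernel γ x`. -/
def slabPost (γ : ℝ → ℝ) (x : ℝ) : Measure ℝ :=
  volume.withDensity fun u => ENNReal.ofReal (slabKernel γ x u / conv γ x)

/-- The second moment about `μ` of the single-coordinate posterior `coordPost γ α x`. -/
def coordRisk (γ : ℝ → ℝ) (α x μ : ℝ) : ℝ :=
  aWt γ α x * (slabMoment γ μ x / conv γ x) + (1 - aWt γ α x) * μ ^ 2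

section Posterior

variable {γ : ℝ → ℝ} {α : ℝ}

namespace IsSlab

lemma measurable_slabPost_density (hγ : IsSlab γ) (x : ℝ) :
    Measurable fun u => ENNReal.ofReal (slabKernel γ x u / conv γ x) :=
  ((hγ.measurable_slabKernel x).div_const _).ennreal_ofReal

lemma isProbabilityMeasure_slabPost (hγ : IsSlab γ) (x : ℝ) :
    IsProbabilityMeasure (slabPost γ x) := by
  constructor
  rw [slabPost, withDensity_apply _ MeasurableSet.univ, Measure.restrict_univ,
    ← ofReal_integral_eq_lintegral_ofReal ((hγ.integrable_slabKernel x).div_const _)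
      (.of_forall fun u => div_nonneg (hγ.slabKernel_nonneg x u) (hγ.conv_pos x).le),
    integral_div, ← conv_eq_integral_slabKernel, div_self (hγ.conv_pos x).ne', ENNReal.ofReal_one]

lemma toReal_slabPost_density_smul (hγ : IsSlab γ) (x : ℝ) (q : ℝ → ℝ) (u : ℝ) :
    (ENNReal.ofReal (slabKernel γ x u / conv γ x)).toReal • q u =
      q u * slabKernel γ x u / conv γ x := by
  rw [ENNReal.toReal_ofReal (div_nonneg (hγ.slabKernel_nonneg x u) (hγ.conv_pos x).le),
    smul_eq_mul]
  ring

lemma integrable_slabPost (hγ : IsSlab γ) {x : ℝ} {q : ℝ → ℝ}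
    (hq : Integrable fun u => q u * slabKernel γ x u) : Integrable q (slabPost γ x) := by
  rw [slabPost, integrable_withDensity_iff_integrable_smul' (hγ.measurable_slabPost_density x)
    (.of_forall fun _ => ENNReal.ofReal_lt_top)]
  simp_rw [hγ.toReal_slabPost_density_smul x q]
  exact hq.div_const _

lemma integral_slabPost (hγ : IsSlab γ) (x : ℝ) (q : ℝ → ℝ) :
    ∫ u, q u ∂(slabPost γ x) = (∫ u, q u * slabKernel γ x u) / conv γ x := by
  rw [slabPost, integral_withDensity_eq_integral_toReal_smul (hγ.measurable_slabPost_density x)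
    (.of_forall fun _ => ENNReal.ofReal_lt_top), ← integral_div]
  simp_rw [hγ.toReal_slabPost_density_smul x q]

lemma aWt_mem_Icc (hγ : IsSlab γ) (hα : α ∈ Icc 0 1) (x : ℝ) : aWt γ α x ∈ Icc 0 1 := by
  have hslab : 0 ≤ α * conv γ x := mul_nonneg hα.1 (hγ.conv_pos x).le
  have hnull : 0 ≤ (1 - α) * phi x := mul_nonneg (sub_nonneg.2 hα.2) (phi_pos x).le
  exact ⟨div_nonneg hslab (add_nonneg hnull hslab),
    div_le_one_of_le₀ (le_add_of_nonneg_left hnull) (add_nonneg hnull hslab)⟩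

lemma coordPost_eq_add (hγ : IsSlab γ) (hα : α ∈ Icc 0 1) (x : ℝ) :
    coordPost γ α x = ENNReal.ofReal (aWt γ α x) • slabPost γ x +
      ENNReal.ofReal (1 - aWt γ α x) • Measure.dirac 0 := by
  rw [coordPost, withDensity_add_measure]
  congr 1
  · rw [slabPost, ← withDensity_smul _ (hγ.measurable_slabPost_density x)]
    refine withDensity_congr_ae ((Measure.ae_ne volume 0).mono fun u hu => ?_)
    simp only [coordDen, if_neg hu, ENNReal.ofReal_mul (hγ.aWt_mem_Icc hα x).1]
    rfl
  · classical
    ext A hA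
    rw [withDensity_apply _ hA, restrict_dirac' hA]
    by_cases h : (0 : ℝ) ∈ A <;> simp [h, coordDen]

lemma isProbabilityMeasure_coordPost (hγ : IsSlab γ) (hα : α ∈ Icc 0 1) (x : ℝ) :
    IsProbabilityMeasure (coordPost γ α x) := by
  have := hγ.isProbabilityMeasure_slabPost x
  obtain ⟨h0, h1⟩ := hγ.aWt_mem_Icc hα x
  constructor
  rw [hγ.coordPost_eq_add hα, Measure.add_apply, Measure.smul_apply, Measure.smul_apply,
    measure_univ, measure_univ, smul_eq_mul, smul_eq_mul, mul_one, mul_one,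
    ← ENNReal.ofReal_add h0 (sub_nonneg.2 h1), add_sub_cancel, ENNReal.ofReal_one]

lemma integrable_slabPost_sq_sub (hγ : IsSlab γ) (μ x : ℝ) :
    Integrable (fun u => (u - μ) ^ 2) (slabPost γ x) :=
  hγ.integrable_slabPost (hγ.integrable_sq_sub_mul_slabKernel μ x)

lemma integrable_coordPost_sq_sub (hγ : IsSlab γ) (hα : α ∈ Icc 0 1) (μ x : ℝ) :
    Integrable (fun u => (u - μ) ^ 2) (coordPost γ α x) := by
  rw [hγ.coordPost_eq_add hα]
  exact ((hγ.integrable_slabPost_sq_sub μ x).smul_measure ENNReal.ofReal_ne_top).add_measure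
    ((integrable_dirac enorm_lt_top).smul_measure ENNReal.ofReal_ne_top)

lemma integral_coordPost_sq_sub (hγ : IsSlab γ) (hα : α ∈ Icc 0 1) (μ x : ℝ) :
    ∫ u, (u - μ) ^ 2 ∂(coordPost γ α x) = coordRisk γ α x μ := by
  obtain ⟨h0, h1⟩ := hγ.aWt_mem_Icc hα x
  rw [hγ.coordPost_eq_add hα, integral_add_measure
      ((hγ.integrable_slabPost_sq_sub μ x).smul_measure ENNReal.ofReal_ne_top)
      ((integrable_dirac enorm_lt_top).smul_measure ENNReal.ofReal_ne_top),
    integral_smul_measure, integral_smul_measure, integral_dirac, hγ.integral_slabPost,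
    ENNReal.toReal_ofReal h0, ENNReal.toReal_ofReal (sub_nonneg.2 h1), zero_sub, neg_sq,
    smul_eq_mul, smul_eq_mul]
  rfl

lemma integral_post_sum_sq_sub (hγ : IsSlab γ) {n : ℕ} (hα : α ∈ Icc 0 1) (X θ : Fin n → ℝ) :
    ∫ ϑ, (∑ i, (ϑ i - θ i) ^ 2) ∂(post γ n α X) = ∑ i, coordRisk γ α (X i) (θ i) := by
  have hprob := fun i => hγ.isProbabilityMeasure_coordPost hα (X i)
  have hint := fun i => hγ.integrable_coordPost_sq_sub hα (θ i) (X i)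
  have hint_eval : ∀ i ∈ Finset.univ, Integrable (fun ϑ : Fin n → ℝ => (ϑ i - θ i) ^ 2)
      (Measure.pi fun i => coordPost γ α (X i)) := fun i _ =>
    integrable_comp_eval (μ := fun i => coordPost γ α (X i)) (hint i)
  rw [post, integral_finsetSum _ hint_eval]
  refine Finset.sum_congr rfl fun i _ => ?_
  exact (integral_comp_eval (μ := fun i => coordPost γ α (X i))
    (hint i).aestronglyMeasurable).trans (hγ.integral_coordPost_sq_sub hα _ _)

lemma coordRisk_nonneg (hγ : IsSlab γ) (hα : α ∈ Icc 0 1) (x μ : ℝ) : 0 ≤ coordRisk γ α x μ := by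
  rw [← hγ.integral_coordPost_sq_sub hα]
  exact integral_nonneg fun u => sq_nonneg _

lemma mul_conv_zero_le_aWt (hγ : IsSlab γ) (hα : α ∈ Icc 0 1) (x : ℝ) :
    α * conv γ 0 ≤ aWt γ α x := by
  have hg0 := (hγ.conv_pos 0).le
  have hα1 : 0 ≤ 1 - α := sub_nonneg.2 hα.2
  have hmix : conv γ 0 * marginal γ α x ≤ conv γ x := by
    calc conv γ 0 * marginal γ α x
        = (1 - α) * (conv γ 0 * phi x) + α * (conv γ 0 * conv γ x) := by unfold marginal; ring
      _ ≤ (1 - α) * conv γ x + α * conv γ x := by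
          have := hα.1
          gcongr
          · exact (mul_le_mul_of_nonneg_left (phi_le_exp x) hg0).trans
              (hγ.conv_zero_mul_exp_le_conv x)
          · exact mul_le_of_le_one_left (hγ.conv_pos x).le (hγ.conv_le_one 0)
      _ = conv γ x := by ring
  change α * conv γ 0 ≤ α * conv γ x / marginal γ α x
  rw [le_div_iff₀ (hγ.marginal_pos hα x), mul_assoc]
  exact mul_le_mul_of_nonneg_left hmix hα.1

lemma slabMoment_mul_le_coordRisk_zero (hγ : IsSlab γ) (hα : α ∈ Icc 0 1) (x : ℝ) :
    slabMoment γ 0 0 * α ≤ coordRisk γ α x 0 :=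
  calc slabMoment γ 0 0 * α = α * conv γ 0 * (slabMoment γ 0 0 / conv γ 0) := by
        field_simp [(hγ.conv_pos 0).ne']
    _ ≤ aWt γ α x * (slabMoment γ 0 x / conv γ x) :=
        mul_le_mul (hγ.mul_conv_zero_le_aWt hα x) (hγ.slabMoment_zero_div_conv_zero_le x)
          (div_nonneg (hγ.slabMoment_nonneg 0 0) (hγ.conv_pos 0).le) (hγ.aWt_mem_Icc hα x).1
    _ = coordRisk γ α x 0 := by simp only [coordRisk, ne_eq, OfNat.ofNat_ne_zero,
        not_false_eq_true, zero_pow, mul_zero, add_zero]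

lemma coordRisk_le (hγ : IsSlab γ) (hα : α ∈ Icc 0 1) (x μ : ℝ) :
    coordRisk γ α x μ ≤ 4 * x ^ 2 - 8 * log (conv γ 0) + 2 * (x - μ) ^ 2 + μ ^ 2 := by
  obtain ⟨h0, h1⟩ := hγ.aWt_mem_Icc hα x
  have hmom : 0 ≤ slabMoment γ μ x / conv γ x :=
    div_nonneg (hγ.slabMoment_nonneg μ x) (hγ.conv_pos x).le
  exact add_le_add ((mul_le_of_le_one_left hmom h1).trans (hγ.slabMoment_div_conv_le μ x))
    (mul_le_of_le_one_left (sq_nonneg μ) (sub_le_self 1 h0))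

lemma measurable_coordRisk (hγ : IsSlab γ) (μ : ℝ) :
    Measurable fun p : ℝ × ℝ => coordRisk γ p.1 p.2 μ := by
  have hconv : Measurable fun p : ℝ × ℝ => conv γ p.2 := hγ.measurable_conv.comp measurable_snd
  have haWt : Measurable fun p : ℝ × ℝ => aWt γ p.1 p.2 :=
    (measurable_fst.mul hconv).div hγ.measurable_uncurry_marginal
  exact (haWt.mul (((hγ.measurable_slabMoment μ).comp measurable_snd).div hconv)).add
    ((measurable_const.sub haWt).mul_const _)

end IsSlab

end Posterior

section Risk

variable {γ : ℝ → ℝ} {n s : ℕ} {α αn : ℝ} {hahat : (Fin n → ℝ) → ℝ}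

lemma sub_le_card_eq_zero {θ : Fin n → ℝ} (hθ : θ ∈ ell0 n s) :
    (n : ℝ) - s ≤ Finset.card {i | θ i = 0} := by
  rw [ell0, mem_ofPred_eq, Nat.card_eq_fintype_card, Fintype.card_subtype] at hθ
  have hsplit := Finset.card_filter_add_card_filter_not (s := Finset.univ) fun i => θ i = 0
  rw [Finset.card_univ, Fintype.card_fin] at hsplit
  rw [sub_le_iff_le_add]
  exact_mod_cast hsplit.symm.trans_le (Nat.add_le_add_left hθ _)

lemma IsSlab.mul_le_sum_coordRisk (hγ : IsSlab γ) (hα : α ∈ Icc 0 1) {θ : Fin n → ℝ}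
    (hθ : θ ∈ ell0 n s) (X : Fin n → ℝ) :
    slabMoment γ 0 0 * α * (n - s) ≤ ∑ i, coordRisk γ α (X i) (θ i) :=
  calc slabMoment γ 0 0 * α * (n - s)
      ≤ slabMoment γ 0 0 * α * Finset.card {i | θ i = 0} :=
        mul_le_mul_of_nonneg_left (sub_le_card_eq_zero hθ)
          (mul_nonneg (hγ.slabMoment_nonneg 0 0) hα.1)
    _ = ∑ i with θ i = 0, slabMoment γ 0 0 * α := by
        rw [Finset.sum_const, nsmul_eq_mul, mul_comm]
    _ ≤ ∑ i with θ i = 0, coordRisk γ α (X i) (θ i) := Finset.sum_le_sum fun i hi => by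
        rw [(Finset.mem_filter.1 hi).2]
        exact hγ.slabMoment_mul_le_coordRisk_zero hα (X i)
    _ ≤ ∑ i, coordRisk γ α (X i) (θ i) :=
        Finset.sum_le_sum_of_subset_of_nonneg (Finset.filter_subset _ _)
          fun i _ _ => hγ.coordRisk_nonneg hα _ _

namespace IsMMLE

lemma postRisk_eq (h : IsMMLE γ αn hahat) (hγ : IsSlab γ) (hαn : 0 ≤ αn) (θ : Fin n → ℝ) :
    postRisk γ hahat θ = ∫ X, ∑ i, coordRisk γ (hahat X) (X i) (θ i) ∂(Pdata n θ) :=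
  integral_congr_ae <| .of_forall fun X => hγ.integral_post_sum_sq_sub (h.mem_Icc hαn X) X θ

lemma integrable_sum_coordRisk (h : IsMMLE γ αn hahat) (hγ : IsSlab γ) (hαn : 0 ≤ αn)
    (θ : Fin n → ℝ) :
    Integrable (fun X => ∑ i, coordRisk γ (hahat X) (X i) (θ i)) (Pdata n θ) := by
  refine integrable_finsetSum _ fun i _ => ?_
  have hlin : MemLp id 2 (ProbabilityTheory.gaussianReal (θ i) 1) :=
    ProbabilityTheory.memLp_id_gaussianReal 2
  have hbound : Integrable
      (fun x => 4 * x ^ 2 - 8 * log (conv γ 0) + 2 * (x - θ i) ^ 2 + θ i ^ 2)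
      (ProbabilityTheory.gaussianReal (θ i) 1) :=
    (((hlin.integrable_sq.const_mul 4).sub (integrable_const _)).add
      ((hlin.sub (memLp_const (θ i))).integrable_sq.const_mul 2)).add (integrable_const _)
  have hboundX : Integrable (fun X : Fin n → ℝ =>
      4 * X i ^ 2 - 8 * log (conv γ 0) + 2 * (X i - θ i) ^ 2 + θ i ^ 2) (Pdata n θ) :=
    integrable_comp_eval (μ := fun i => ProbabilityTheory.gaussianReal (θ i) 1) hbound
  refine hboundX.mono'
    ((hγ.measurable_coordRisk (θ i)).comp (h.1.prodMk (measurable_pi_apply i))).aestronglyMeasurable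
    (.of_forall fun X => ?_)
  rw [norm_of_nonneg (hγ.coordRisk_nonneg (h.mem_Icc hαn X) _ _)]
  exact hγ.coordRisk_le (h.mem_Icc hαn X) _ _

lemma mul_measureReal_le_postRisk (h : IsMMLE γ αn hahat) (hγ : IsSlab γ) (hαn : 0 ≤ αn)
    (hs : s ≤ n) {θ : Fin n → ℝ} (hθ : θ ∈ ell0 n s) (α : ℝ) :
    slabMoment γ 0 0 * α * (n - s) * (Pdata n θ).real {X | α ≤ hahat X} ≤ postRisk γ hahat θ := by
  have hmeas : MeasurableSet {X | α ≤ hahat X} := measurableSet_le measurable_const h.1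
  have hsn : (0 : ℝ) ≤ n - s := sub_nonneg.2 (Nat.cast_le.2 hs)
  rw [h.postRisk_eq hγ hαn, mul_comm, ← smul_eq_mul, ← integral_indicator_const _ hmeas]
  refine integral_mono ((integrable_const _).indicator hmeas)
    (h.integrable_sum_coordRisk hγ hαn θ) fun X => indicator_apply_le' (fun hX => ?_) fun _ => ?_
  · refine le_trans ?_ (hγ.mul_le_sum_coordRisk (h.mem_Icc hαn X) hθ X)
    have := hγ.slabMoment_nonneg 0 0
    gcongr
    exact hX
  · exact Finset.sum_nonneg fun i _ => hγ.coordRisk_nonneg (h.mem_Icc hαn X) _ _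

end IsMMLE

end Risk

section LowerBound

variable {γ : ℝ → ℝ}

lemma half_le_sub_of_exp_neg_sq_eq {n s : ℕ} {r : ℝ} (hr : 3 ≤ r) (hrs : exp (-r ^ 2) = s / n)
    (hn : 0 < n) : (n : ℝ) / 2 ≤ n - s := by
  have hn' : (0 : ℝ) < n := Nat.cast_pos.2 hn
  have hexp : exp (-r ^ 2) ≤ 1 / 2 := by
    rw [exp_neg, one_div]
    exact inv_anti₀ two_pos (by nlinarith [add_one_le_exp (r ^ 2)])
  rw [hrs, div_le_iff₀ hn'] at hexp
  linarith

lemma criticalWeight_mul_eq {n s : ℕ} {r : ℝ} (hn : 0 < n) (hrs : exp (-r ^ 2) = s / n) :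
    criticalWeight r * n = s * exp r := by
  have hn' : (n : ℝ) ≠ 0 := Nat.cast_ne_zero.2 hn.ne'
  rw [criticalWeight, exp_add, hrs]
  field_simp

lemma IsMMLE.le_postRisk_spikeVector {n s : ℕ} {αn r M : ℝ} {hahat : (Fin n → ℝ) → ℝ}
    (h : IsMMLE γ αn hahat) (hγ : IsSlab γ) (hαn : 0 ≤ αn) (hs : 1 ≤ s) (hn : 0 < n) (hr : 3 ≤ r)
    (hrs : exp (-r ^ 2) = s / n)
    (hnull : ∫ x, nullRatio γ (2 * criticalWeight r) x ∂(ProbabilityTheory.gaussianReal 0 1) ≤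
      1 + exp (-r ^ 2) / 4)
    (hsignal : ∫ x, nullRatio γ (2 * criticalWeight r) x ∂(ProbabilityTheory.gaussianReal M 1) ≤
      1 / 2) :
    slabMoment γ 0 0 / 2 * (1 - exp (-1 / 8)) * s * exp r ≤
      postRisk γ hahat (spikeVector n s M) := by
  have hhalf := half_le_sub_of_exp_neg_sq_eq hr hrs hn
  have hsn' : (0 : ℝ) ≤ n - s := (by positivity : (0 : ℝ) ≤ n / 2).trans hhalf
  have hsn : s ≤ n := Nat.cast_le.1 (sub_nonneg.1 hsn')
  have hprob : 1 - exp (-1 / 8) ≤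
      (Pdata n (spikeVector n s M)).real {X | criticalWeight r ≤ hahat X} := by
    have hcompl : {X | criticalWeight r ≤ hahat X} = {X | hahat X < criticalWeight r}ᶜ := by
      simp only [compl_ofPred, not_lt]
    rw [hcompl, probReal_compl_eq_one_sub (measurableSet_lt h.1 measurable_const)]
    linarith [h.measureReal_lt_criticalWeight_le hγ hαn hs hsn hr hrs hnull hsignal]
  have hmoment := hγ.slabMoment_nonneg 0 0
  have hweight : 0 ≤ criticalWeight r := (exp_pos _).le
  have hgap : 0 ≤ 1 - exp (-1 / 8 : ℝ) := sub_nonneg.2 (exp_le_one_iff.2 (by norm_num))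
  calc slabMoment γ 0 0 / 2 * (1 - exp (-1 / 8)) * s * exp r
      = slabMoment γ 0 0 * criticalWeight r * (n / 2) * (1 - exp (-1 / 8)) := by
        linear_combination (-(slabMoment γ 0 0 / 2 * (1 - exp (-1 / 8)))) *
          criticalWeight_mul_eq hn hrs
    _ ≤ slabMoment γ 0 0 * criticalWeight r * (n - s) *
          (Pdata n (spikeVector n s M)).real {X | criticalWeight r ≤ hahat X} := by
        gcongr
    _ ≤ postRisk γ hahat (spikeVector n s M) :=
        h.mul_measureReal_le_postRisk hγ hαn hsn (spikeVector_mem_ell0 n s M) _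

lemma sq_le_log_div {n s : ℕ} {R : ℝ} (hs : 1 ≤ s) (hsn : (s : ℝ) ≤ exp (-R ^ 2) * n) :
    R ^ 2 ≤ log ((n : ℝ) / s) := by
  have hs' : (0 : ℝ) < s := Nat.cast_pos.2 hs
  have hle : exp (R ^ 2) * s ≤ n := by
    rwa [exp_neg, ← div_eq_inv_mul, le_div_iff₀' (exp_pos _)] at hsn
  have hexp : exp (R ^ 2) ≤ n / s := (le_div_iff₀ hs').2 hle
  exact (le_log_iff_exp_le ((exp_pos _).trans_le hexp)).2 hexp

theorem laplace_slab_suboptimal_general (hγ : IsSlab γ) {C : ℝ} (hC : ∀ u, γ u ≤ C * exp (-|u|)) :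
    ∃ D > (0 : ℝ), ∃ c0 > (0 : ℝ), ∀ n s : ℕ, 1 ≤ s → (s : ℝ) ≤ c0 * n →
      ∃ θ0 ∈ ell0 n s, ∀ αn, 0 ≤ αn → ∀ hahat : (Fin n → ℝ) → ℝ, IsMMLE γ αn hahat →
        D * s * exp (√(log ((n : ℝ) / s))) ≤ postRisk γ hahat θ0 := by
  obtain ⟨R, hR⟩ := Filter.eventually_atTop.1 (hγ.eventually_integral_nullRatio_le hC)
  refine ⟨slabMoment γ 0 0 / 2 * (1 - exp (-1 / 8)),
    mul_pos (half_pos (hγ.slabMoment_pos 0 0)) (sub_pos.2 (exp_lt_one_iff.2 (by norm_num))),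
    exp (-(max R 3) ^ 2), exp_pos _, fun n s hs hsn => ?_⟩
  have hn : 0 < n := Nat.pos_of_ne_zero fun hn => by
    subst hn
    simp only [Nat.cast_zero, mul_zero, Nat.cast_nonpos] at hsn
    omega
  have hlog := sq_le_log_div hs hsn
  have hr : max R 3 ≤ √(log ((n : ℝ) / s)) := le_sqrt_of_sq_le hlog
  have hr3 := (le_max_right R 3).trans hr
  have hrs : exp (-√(log ((n : ℝ) / s)) ^ 2) = s / n := by
    rw [sq_sqrt ((sq_nonneg _).trans hlog), exp_neg, exp_log (by positivity), inv_div]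
  have hβ := two_mul_criticalWeight_mem_Ioc hr3
  obtain ⟨M, hM⟩ := ((hγ.tendsto_integral_nullRatio_atTop
    ⟨hβ.1, hβ.2.trans_lt one_half_lt_one⟩).eventually_le_const one_half_pos).exists
  exact ⟨spikeVector n s M, spikeVector_mem_ell0 n s M, fun αn hαn hahat h =>
    h.le_postRisk_spikeVector hγ hαn hs hn hr3 hrs (hR _ ((le_max_left R 3).trans hr)) hM⟩

lemma isSlab_lapDen : IsSlab lapDen where
  measurable := by unfold lapDen; fun_prop
  nonneg u := by unfold lapDen; positivity
  even u := by simp only [lapDen, abs_neg]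
  integral_eq_one := by
    have := integral_exp_neg_mul_abs one_pos
    simp only [neg_mul, one_mul, div_one] at this
    simp only [lapDen, integral_div, this]
    norm_num

end LowerBound

/-- Theorem 1: suboptimality of the Laplace slab.
There exist `D > 0`, `N₀ > 0`, `c₀ > 0` such that for any `n ≥ N₀` and any
`s` with `1 ≤ s ≤ c₀ n`, there is `θ₀ ∈ ℓ₀[s]` for which the complete
empirical Bayes posterior second moment is at least `D s exp(√(log(n/s)))`. -/
theorem laplace_slab_suboptimal :
    ∃ D > (0 : ℝ), ∃ N0 : ℕ, 0 < N0 ∧ ∃ c0 > (0 : ℝ),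
      ∀ n : ℕ, N0 ≤ n → ∀ s : ℕ, 1 ≤ s → (s : ℝ) ≤ c0 * n →
      ∀ t : ℝ → ℝ, IsThreshold lapDen t →
      ∀ αn : ℝ, αn ∈ Set.Ioo (0 : ℝ) 1 → t αn = Real.sqrt (2 * Real.log n) →
      ∀ hahat : (Fin n → ℝ) → ℝ, IsMMLE lapDen αn hahat →
      ∃ θ0 ∈ ell0 n s,
        D * s * Real.exp (Real.sqrt (Real.log ((n : ℝ) / s))) ≤
          postRisk lapDen hahat θ0 := by
  obtain ⟨D, hD, c0, hc0, hrisk⟩ := laplace_slab_suboptimal_general isSlab_lapDen (C := 1 / 2)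
    fun u => (div_eq_mul_one_div _ _).trans_le (mul_comm _ _).le
  refine ⟨D, hD, 1, one_pos, c0, hc0, fun n _ s hs hsn _ _ αn hαn _ hahat h => ?_⟩
  obtain ⟨θ0, hθ0, hle⟩ := hrisk n s hs hsn
  exact ⟨θ0, hθ0, hle αn hαn.1.le hahat h⟩

end
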